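/- Let L, T, τ > 0 and let f : ℝ → ℝ be continuously differentiable. Let q = (q₀, q₁, q₂) be a C¹ solution, L-periodic in x, of the system ∂_t q₀ + ∂_x f(q₀) + ∂_x q₂ = 0, ∂_t q₁ + τ ∂_x q₁ = −q₂, τ ∂_t q₂ + ∂_x q₀ = q₁, and let q̄ = (q̄₀, q̄₁, q̄₂) be a C¹ triple, L-periodic in x, satisfying the same system except that the second equation reads ∂_t q̄₁ + τ ∂_x q̄₁ = −q̄₂ + τ R for some continuous R. Then the relative energy η(q, q̄)(t) = ∫₀^L (½ (q₀−q̄₀)² + ½ (q₁−q̄₁)² + (τ/2)(q₂−q̄₂)²) dx is differentiable in t and satisfies d/dt η(q, q̄)(t) = −∫₀^L [ (∂_x q̄₀) (f(q₀) − f(q̄₀) − f′(q̄₀)(q₀ − q̄₀)) + τ (q₁ − q̄₁) R ] dx for all t ∈ [0,T]. -/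

import Mathlib

open MeasureTheory

/-- Partial derivative with respect to the first (time) variable. -/
noncomputable def pdt (u : ℝ → ℝ → ℝ) : ℝ → ℝ → ℝ :=
  fun t x => deriv (fun s => u s x) t

/-- Partial derivative with respect to the second (space) variable. -/
noncomputable def pdx (u : ℝ → ℝ → ℝ) : ℝ → ℝ → ℝ :=
  fun t x => deriv (fun y => u t y) x

section PartialDerivatives

variable {u : ℝ → ℝ → ℝ}

theorem hasDerivAt_pdt (hu : ContDiff ℝ 1 (Function.uncurry u)) (t x : ℝ) :
    HasDerivAt (fun s => u s x) (pdt u t x) t := by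
  have h : ContDiff ℝ 1 (fun s => u s x) :=
    hu.comp (contDiff_id.prodMk contDiff_const)
  exact (h.differentiable one_ne_zero t).hasDerivAt

theorem hasDerivAt_pdx (hu : ContDiff ℝ 1 (Function.uncurry u)) (t x : ℝ) :
    HasDerivAt (fun y => u t y) (pdx u t x) x := by
  have h : ContDiff ℝ 1 (fun y => u t y) :=
    hu.comp (contDiff_const.prodMk contDiff_id)
  exact (h.differentiable one_ne_zero x).hasDerivAt

theorem pdt_eq_fderiv (hu : ContDiff ℝ 1 (Function.uncurry u)) (t x : ℝ) :
    pdt u t x = fderiv ℝ (Function.uncurry u) (t, x) (1, 0) := by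
  have h := (hu.differentiable one_ne_zero (t, x)).hasFDerivAt
  exact (h.comp_hasDerivAt t ((hasDerivAt_id t).prodMk (hasDerivAt_const t x))).deriv

theorem pdx_eq_fderiv (hu : ContDiff ℝ 1 (Function.uncurry u)) (t x : ℝ) :
    pdx u t x = fderiv ℝ (Function.uncurry u) (t, x) (0, 1) := by
  have h := (hu.differentiable one_ne_zero (t, x)).hasFDerivAt
  exact (h.comp_hasDerivAt x ((hasDerivAt_const x t).prodMk (hasDerivAt_id x))).deriv

theorem continuous_uncurry_pdt (hu : ContDiff ℝ 1 (Function.uncurry u)) :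
    Continuous (Function.uncurry (pdt u)) := by
  have h : Function.uncurry (pdt u) = fun p => fderiv ℝ (Function.uncurry u) p (1, 0) :=
    funext fun p => pdt_eq_fderiv hu p.1 p.2
  rw [h]
  exact (hu.continuous_fderiv one_ne_zero).clm_apply continuous_const

theorem continuous_pdx (hu : ContDiff ℝ 1 (Function.uncurry u)) (t : ℝ) :
    Continuous (pdx u t) := by
  have h : pdx u t = fun x => fderiv ℝ (Function.uncurry u) (t, x) (0, 1) :=
    funext fun x => pdx_eq_fderiv hu t x
  rw [h]
  exact ((hu.continuous_fderiv one_ne_zero).comp (by fun_prop)).clm_apply continuous_const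

/-- Differentiation under the integral sign for a jointly `C¹` integrand on a compact interval. -/
theorem hasDerivAt_intervalIntegral_of_contDiff (hu : ContDiff ℝ 1 (Function.uncurry u))
    (a b t : ℝ) :
    HasDerivAt (fun s => ∫ x in a..b, u s x) (∫ x in a..b, pdt u t x) t := by
  have hc := continuous_uncurry_pdt hu
  have hslice (s : ℝ) : Continuous (u s) := hu.continuous.comp (Continuous.prodMk_right s)
  obtain ⟨C, hC⟩ := ((isCompact_closedBall t 1).prod
    (isCompact_uIcc (a := a) (b := b))).exists_bound_of_continuousOn hc.continuousOn
  refine (intervalIntegral.hasDerivAt_integral_of_dominated_loc_of_deriv_le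
    (bound := fun _ => C) (Metric.closedBall_mem_nhds t one_pos)
    (.of_forall fun s => (hslice s).aestronglyMeasurable)
    ((hslice t).intervalIntegrable a b)
    (hc.comp (Continuous.prodMk_right t)).aestronglyMeasurable
    (.of_forall fun x hx s hs => hC (s, x) ⟨hs, Set.uIoc_subset_uIcc hx⟩)
    intervalIntegrable_const
    (.of_forall fun x _ s _ => hasDerivAt_pdt hu s x)).2

end PartialDerivatives

/-- The integral over a full period of the derivative of a periodic function vanishes. -/
theorem Function.Periodic.intervalIntegral_deriv_eq_zero {P P' : ℝ → ℝ} {L : ℝ}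
    (hP : Function.Periodic P L) (hderiv : ∀ x, HasDerivAt P (P' x) x) (hcont : Continuous P') :
    ∫ x in (0 : ℝ)..L, P' x = 0 := by
  rw [intervalIntegral.integral_eq_sub_of_hasDerivAt (fun x _ => hderiv x)
    (hcont.intervalIntegrable _ _), ← zero_add L, hP 0, sub_self]

/-- Product rule for the relative flux: `(v - w) ∂ₓ(f(v) - f(w))` is an exact derivative up to
the relative quantity `f(v) - f(w) - f'(w)(v - w)` weighted by `∂ₓ w`. -/
theorem hasDerivAt_relative_flux {f F v w : ℝ → ℝ} {fv' fw' v' w' x : ℝ}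
    (hF : ∀ y, HasDerivAt F (f y) y)
    (hfv : HasDerivAt f fv' (v x)) (hfw : HasDerivAt f fw' (w x))
    (hv : HasDerivAt v v' x) (hw : HasDerivAt w w' x) :
    HasDerivAt (fun y => (v y - w y) * (f (v y) - f (w y))
        - (F (v y) - F (w y) - f (w y) * (v y - w y)))
      ((v x - w x) * (fv' * v' - fw' * w') - w' * (f (v x) - f (w x) - fw' * (v x - w x))) x := by
  have hfv := hfv.comp x hv
  have hfw := hfw.comp x hw
  have h := ((hv.sub hw).mul (hfv.sub hfw)).sub
    ((((hF (v x)).comp x hv).sub ((hF (w x)).comp x hw)).sub (hfw.mul (hv.sub hw)))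
  refine h.congr_deriv ?_
  simp only [Function.comp_apply, Pi.sub_apply]
  ring

/-- Relative energy identity for the hyperbolic approximation of the generalized
Benjamin–Bona–Mahony equation: if `q` solves the system and `q̄` solves the system
with a residual `τ R` in the second equation, then the relative energy satisfies
`d/dt η(q, q̄) = -∫ (∂_x q̄₀)(f(q₀) - f(q̄₀) - f'(q̄₀)(q₀ - q̄₀)) + τ (q₁ - q̄₁) R dx`. -/
theorem bbm_relative_energy_identity
    (L T τ : ℝ) (hL : 0 < L) (hT : 0 < T) (hτ : 0 < τ)
    (f : ℝ → ℝ) (hf : ContDiff ℝ 1 f)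
    (q₀ q₁ q₂ qb₀ qb₁ qb₂ R : ℝ → ℝ → ℝ)
    (hq₀ : ContDiff ℝ 1 (Function.uncurry q₀))
    (hq₁ : ContDiff ℝ 1 (Function.uncurry q₁))
    (hq₂ : ContDiff ℝ 1 (Function.uncurry q₂))
    (hqb₀ : ContDiff ℝ 1 (Function.uncurry qb₀))
    (hqb₁ : ContDiff ℝ 1 (Function.uncurry qb₁))
    (hqb₂ : ContDiff ℝ 1 (Function.uncurry qb₂))
    (hR : Continuous (Function.uncurry R))
    (hper₀ : ∀ t, Function.Periodic (q₀ t) L)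
    (hper₁ : ∀ t, Function.Periodic (q₁ t) L)
    (hper₂ : ∀ t, Function.Periodic (q₂ t) L)
    (hperb₀ : ∀ t, Function.Periodic (qb₀ t) L)
    (hperb₁ : ∀ t, Function.Periodic (qb₁ t) L)
    (hperb₂ : ∀ t, Function.Periodic (qb₂ t) L)
    (heq₀ : ∀ t ∈ Set.Icc (0:ℝ) T, ∀ x : ℝ,
      pdt q₀ t x + pdx (fun s y => f (q₀ s y)) t x + pdx q₂ t x = 0)
    (heq₁ : ∀ t ∈ Set.Icc (0:ℝ) T, ∀ x : ℝ,
      pdt q₁ t x + τ * pdx q₁ t x = - q₂ t x)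
    (heq₂ : ∀ t ∈ Set.Icc (0:ℝ) T, ∀ x : ℝ,
      τ * pdt q₂ t x + pdx q₀ t x = q₁ t x)
    (heqb₀ : ∀ t ∈ Set.Icc (0:ℝ) T, ∀ x : ℝ,
      pdt qb₀ t x + pdx (fun s y => f (qb₀ s y)) t x + pdx qb₂ t x = 0)
    (heqb₁ : ∀ t ∈ Set.Icc (0:ℝ) T, ∀ x : ℝ,
      pdt qb₁ t x + τ * pdx qb₁ t x = - qb₂ t x + τ * R t x)
    (heqb₂ : ∀ t ∈ Set.Icc (0:ℝ) T, ∀ x : ℝ,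
      τ * pdt qb₂ t x + pdx qb₀ t x = qb₁ t x) :
    ∀ t ∈ Set.Icc (0:ℝ) T,
      HasDerivWithinAt
        (fun s => ∫ x in (0:ℝ)..L,
          ((q₀ s x - qb₀ s x) ^ 2 / 2 + (q₁ s x - qb₁ s x) ^ 2 / 2
            + τ / 2 * (q₂ s x - qb₂ s x) ^ 2))
        (- ∫ x in (0:ℝ)..L,
          (pdx qb₀ t x
              * (f (q₀ t x) - f (qb₀ t x) - deriv f (qb₀ t x) * (q₀ t x - qb₀ t x))
            + τ * (q₁ t x - qb₁ t x) * R t x))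
        (Set.Icc (0:ℝ) T) t := by
  intro t ht
  have hf' (y : ℝ) : HasDerivAt f (deriv f y) y :=
    (hf.differentiable one_ne_zero y).hasDerivAt
  have hF (y : ℝ) : HasDerivAt (fun z => ∫ r in (0 : ℝ)..z, f r) (f y) y :=
    (hf.continuous.integral_hasStrictDerivAt 0 y).hasDerivAt
  set F : ℝ → ℝ := fun z => ∫ r in (0 : ℝ)..z, f r
  set e : ℝ → ℝ → ℝ := fun s x => (q₀ s x - qb₀ s x) ^ 2 / 2 + (q₁ s x - qb₁ s x) ^ 2 / 2
    + τ / 2 * (q₂ s x - qb₂ s x) ^ 2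
  have he_contDiff : ContDiff ℝ 1 (Function.uncurry e) :=
    (((hq₀.sub hqb₀).pow 2).div_const 2 |>.add (((hq₁.sub hqb₁).pow 2).div_const 2)).add
      (contDiff_const.mul ((hq₂.sub hqb₂).pow 2))
  set r : ℝ → ℝ := fun x => pdx qb₀ t x
      * (f (q₀ t x) - f (qb₀ t x) - deriv f (qb₀ t x) * (q₀ t x - qb₀ t x))
    + τ * (q₁ t x - qb₁ t x) * R t x with hr
  have he_pdt (x : ℝ) : pdt e t x = (q₀ t x - qb₀ t x) * (pdt q₀ t x - pdt qb₀ t x)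
      + (q₁ t x - qb₁ t x) * (pdt q₁ t x - pdt qb₁ t x)
      + τ * (q₂ t x - qb₂ t x) * (pdt q₂ t x - pdt qb₂ t x) := by
    have h := (((((hasDerivAt_pdt hq₀ t x).sub (hasDerivAt_pdt hqb₀ t x)).pow 2).div_const 2).add
      ((((hasDerivAt_pdt hq₁ t x).sub (hasDerivAt_pdt hqb₁ t x)).pow 2).div_const 2)).add
      ((((hasDerivAt_pdt hq₂ t x).sub (hasDerivAt_pdt hqb₂ t x)).pow 2).const_mul (τ / 2))
    refine h.deriv.trans ?_
    simp only [Pi.sub_apply]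
    ring
  have hflux {u : ℝ → ℝ → ℝ} (hu : ContDiff ℝ 1 (Function.uncurry u)) (x : ℝ) :
      pdx (fun s y => f (u s y)) t x = deriv f (u t x) * pdx u t x :=
    ((hf' (u t x)).comp x (hasDerivAt_pdx hu t x)).deriv
  set P : ℝ → ℝ := fun x => (q₀ t x - qb₀ t x) * (q₂ t x - qb₂ t x)
    + τ / 2 * (q₁ t x - qb₁ t x) ^ 2
    + ((q₀ t x - qb₀ t x) * (f (q₀ t x) - f (qb₀ t x))
      - (F (q₀ t x) - F (qb₀ t x) - f (qb₀ t x) * (q₀ t x - qb₀ t x))) with hP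
  have hP_periodic : Function.Periodic P L := fun x => by
    simp only [hP, hper₀ t x, hper₁ t x, hper₂ t x, hperb₀ t x, hperb₁ t x, hperb₂ t x]
  have hP_deriv (x : ℝ) : HasDerivAt P (-pdt e t x - r x) x := by
    have h := ((((hasDerivAt_pdx hq₀ t x).sub (hasDerivAt_pdx hqb₀ t x)).mul
        ((hasDerivAt_pdx hq₂ t x).sub (hasDerivAt_pdx hqb₂ t x))).add
      ((((hasDerivAt_pdx hq₁ t x).sub (hasDerivAt_pdx hqb₁ t x)).pow 2).const_mul (τ / 2))).add
      (hasDerivAt_relative_flux hF (hf' (q₀ t x)) (hf' (qb₀ t x))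
        (hasDerivAt_pdx hq₀ t x) (hasDerivAt_pdx hqb₀ t x))
    refine h.congr_deriv ?_
    have h₀ := heq₀ t ht x
    have hb₀ := heqb₀ t ht x
    rw [hflux hq₀] at h₀
    rw [hflux hqb₀] at hb₀
    rw [he_pdt]
    simp only [hr, Pi.sub_apply]
    linear_combination (q₀ t x - qb₀ t x) * (h₀ - hb₀)
      + (q₁ t x - qb₁ t x) * (heq₁ t ht x - heqb₁ t ht x)
      + (q₂ t x - qb₂ t x) * (heq₂ t ht x - heqb₂ t ht x)
  have hslice {u : ℝ → ℝ → ℝ} (hu : Continuous (Function.uncurry u)) : Continuous (u t) :=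
    hu.comp (Continuous.prodMk_right t)
  have he_cont : Continuous (pdt e t) := hslice (continuous_uncurry_pdt he_contDiff)
  have hr_cont : Continuous r := by
    have c₀ := hslice hq₀.continuous
    have cb₀ := hslice hqb₀.continuous
    have c₁ := hslice hq₁.continuous
    have cb₁ := hslice hqb₁.continuous
    have cR := hslice hR
    have cx := continuous_pdx hqb₀ t
    have cf := hf.continuous
    have cf' := hf.continuous_deriv le_rfl
    fun_prop
  have hzero := hP_periodic.intervalIntegral_deriv_eq_zero hP_deriv (he_cont.neg.sub hr_cont)
  rw [intervalIntegral.integral_sub (he_cont.fun_neg.intervalIntegrable _ _)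
    (hr_cont.intervalIntegrable _ _), intervalIntegral.integral_neg] at hzero
  have hmain := hasDerivAt_intervalIntegral_of_contDiff he_contDiff 0 L t
  rw [show ∫ x in (0 : ℝ)..L, pdt e t x = -∫ x in (0 : ℝ)..L, r x by linarith] at hmain
  exact hmain.hasDerivWithinAt
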